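/- For all integers i, j, k, L, M, the following identity holds in the field of rational functions ℚ(q): \sum q^{T_s + T_δ + T_ε + T_{φ-1}} \{ q^{φ} [L-s+α; α] [L-s+β; β] [M-s+γ; γ] [L-s; δ] [M-s; ε] [M-s; φ] + [L-s+α-1; α-1] [L-s+β; β] [M-s+γ; γ] [L-s; δ] [M-s; ε] [M-s; φ-1] \} = \sum_{τ ≥ 0} q^{τ(M+2) - T_τ + T_{i-τ} + T_{j-τ} + T_{k-τ}} [L-τ; τ] [L-2τ; i-τ] [L-i-τ; j-τ] [M-i-j; k-τ], where the left sum is over all non-negative integers α, β, γ, δ, ε, φ with i = α + δ + ε, j = β + δ + φ, k = γ + ε + φ, s = α + β + γ + δ + ε + φ, and [m; r] denotes the extended q-binomial coefficient. -/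

import Mathlib

open Finset

/-- `(q)_n = (q;q)_n = ∏_{t=0}^{n-1} (1 - q^{t+1})` in `ℚ(q)`. -/
noncomputable def qPoch (n : ℕ) : RatFunc ℚ :=
  ∏ t ∈ Finset.range n, (1 - (RatFunc.X : RatFunc ℚ) ^ (t + 1))

/-- The extended q-binomial coefficient `[m; r] = (q^{m-r+1}; q)_r / (q;q)_r` for `r ≥ 0`
(where `m` may be any integer, so negative powers of `q` are allowed), and `0` for `r < 0`. -/
noncomputable def qbinE (m r : ℤ) : RatFunc ℚ :=
  if 0 ≤ r then
    (∏ t ∈ Finset.range r.toNat, (1 - (RatFunc.X : RatFunc ℚ) ^ (m - r + 1 + (t : ℤ)))) /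
      qPoch r.toNat
  else 0

/-- `T n = n(n+1)/2` on `ℤ` (the division is exact; in particular `T_{-1} = 0`). -/
def triZ (n : ℤ) : ℤ := n * (n + 1) / 2

local notation "𝐪" => (RatFunc.X : RatFunc ℚ)

lemma qq_ne : 𝐪 ≠ 0 := RatFunc.X_ne_zero

lemma qq_pow_ne_one (t : ℕ) : (1 - 𝐪 ^ (t + 1)) ≠ 0 := by
  intro h
  have h1 : 𝐪 ^ (t + 1) = 1 := (sub_eq_zero.mp h).symm
  have h2 : algebraMap (Polynomial ℚ) (RatFunc ℚ) (Polynomial.X ^ (t + 1)) =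
      algebraMap (Polynomial ℚ) (RatFunc ℚ) 1 := by
    rw [map_pow, RatFunc.algebraMap_X, map_one, h1]
  have h3 := RatFunc.algebraMap_injective ℚ h2
  have h4 := congrArg Polynomial.natDegree h3
  simp at h4

lemma qPoch_ne (n : ℕ) : qPoch n ≠ 0 := by
  unfold qPoch
  exact Finset.prod_ne_zero_iff.mpr fun t _ => qq_pow_ne_one t

lemma triZ_sub_one (n : ℤ) : triZ (n - 1) = triZ n - n := by
  unfold triZ
  have : n * (n + 1) = (n - 1) * (n - 1 + 1) + n * 2 := by ring
  rw [this, Int.add_mul_ediv_right _ _ (by norm_num)]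
  ring

/-- reciprocal of `(q)_n`, zero for negative `n`. -/
noncomputable def gInv (n : ℤ) : RatFunc ℚ := if 0 ≤ n then (qPoch n.toNat)⁻¹ else 0

lemma gInv_neg {n : ℤ} (h : n < 0) : gInv n = 0 := by
  unfold gInv; rw [if_neg (by omega)]

lemma gInv_rec (n : ℤ) : gInv (n - 1) = (1 - 𝐪 ^ n) * gInv n := by
  rcases lt_trichotomy n 0 with h | h | h
  · rw [gInv_neg h, gInv_neg (by omega)]; simp
  · subst h; rw [gInv_neg (by omega)]; simp
  · obtain ⟨m, rfl⟩ : ∃ m : ℕ, n = m + 1 := ⟨(n - 1).toNat, by omega⟩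
    unfold gInv
    rw [if_pos (by omega), if_pos (by omega)]
    have h1 : ((m : ℤ) + 1 - 1).toNat = m := by omega
    have h2 : ((m : ℤ) + 1).toNat = m + 1 := by omega
    rw [h1, h2]
    have h3 : qPoch (m + 1) = qPoch m * (1 - 𝐪 ^ (m + 1)) := by
      unfold qPoch; rw [Finset.prod_range_succ]
    have h4 : 𝐪 ^ ((m : ℤ) + 1) = 𝐪 ^ (m + 1) := by
      exact_mod_cast zpow_natCast 𝐪 (m + 1)
    rw [h3, h4]
    have := qPoch_ne m
    have := qq_pow_ne_one m
    field_simp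

/-- `(q^{a+1};q)_r`. -/
noncomputable def pP (a r : ℤ) : RatFunc ℚ :=
  ∏ t ∈ Finset.range r.toNat, (1 - 𝐪 ^ (a + 1 + (t : ℤ)))

lemma pP_zero (a : ℤ) : pP a 0 = 1 := by simp [pP]

lemma pP_right (a : ℤ) {r : ℤ} (h : 0 ≤ r) : pP a (r + 1) = pP a r * (1 - 𝐪 ^ (a + r + 1)) := by
  unfold pP
  rw [show (r + 1).toNat = r.toNat + 1 by omega, Finset.prod_range_succ,
    show a + 1 + (r.toNat : ℤ) = a + r + 1 by omega]

lemma pP_left (a : ℤ) {r : ℤ} (h : 0 ≤ r) : pP a (r + 1) = (1 - 𝐪 ^ (a + 1)) * pP (a + 1) r := by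
  unfold pP
  rw [show (r + 1).toNat = r.toNat + 1 by omega, Finset.prod_range_succ', mul_comm]
  congr 1
  · simp
  · apply Finset.prod_congr rfl
    intro t _
    congr 2
    push_cast; ring

lemma pP_add (a : ℤ) {r : ℤ} (h : 0 ≤ r) (n : ℕ) : pP a (r + n) = pP a r * pP (a + r) n := by
  induction n with
  | zero => simp [pP_zero]
  | succ n ih =>
    push_cast
    rw [← add_assoc, pP_right _ (by omega), pP_right _ (by omega), ih, mul_assoc]
    congr 5
    ring

lemma pP_add' (a : ℤ) {r s : ℤ} (h : 0 ≤ r) (hs : 0 ≤ s) :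
    pP a (r + s) = pP a r * pP (a + r) s := by
  lift s to ℕ using hs
  exact pP_add a h s

lemma qbinE_eq (m r : ℤ) : qbinE m r = pP (m - r) r * gInv r := by
  unfold qbinE pP gInv
  split_ifs with h
  · rw [div_eq_mul_inv]
  · simp

lemma qbinE_neg (m : ℤ) {r : ℤ} (h : r < 0) : qbinE m r = 0 := by
  rw [qbinE_eq, gInv_neg h, mul_zero]

lemma gInv_zero : gInv 0 = 1 := by simp [gInv, qPoch]

lemma qbinE_zero (m : ℤ) : qbinE m 0 = 1 := by
  rw [qbinE_eq, pP_zero, gInv_zero, mul_one]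

lemma pascal1 (m r : ℤ) : qbinE m r = qbinE (m - 1) r + 𝐪 ^ (m - r) * qbinE (m - 1) (r - 1) := by
  rcases lt_trichotomy r 0 with h | h | h
  · simp [qbinE_neg _ h, qbinE_neg _ (show r - 1 < 0 by omega)]
  · subst h
    rw [qbinE_zero, qbinE_zero, qbinE_neg _ (by omega)]; simp
  · rw [qbinE_eq, qbinE_eq, qbinE_eq, gInv_rec]
    have h1 := pP_right (m - r) (show 0 ≤ r - 1 by omega)
    have h2 := pP_left (m - 1 - r) (show 0 ≤ r - 1 by omega)
    rw [show r - 1 + 1 = r by ring] at h1 h2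
    rw [show m - 1 - (r - 1) = m - r by ring, h1, h2]
    rw [show m - 1 - r + 1 = m - r by ring, show m - r + (r - 1) + 1 = (m - r) + r by ring,
      zpow_add₀ qq_ne]
    ring

lemma qbinE_self_zero {m r : ℤ} (h0 : 0 ≤ m) (h : m < r) : qbinE m r = 0 := by
  rw [qbinE_eq]
  have : pP (m - r) r = 0 := by
    unfold pP
    apply Finset.prod_eq_zero (i := (r - m - 1).toNat) (by simp; omega)
    rw [show m - r + 1 + ((r - m - 1).toNat : ℤ) = 0 by omega]; simp
  rw [this, zero_mul]

/-- product of the six binomials -/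
noncomputable def core (N K a b c d e f : ℤ) : RatFunc ℚ :=
  qbinE (N + a) a * qbinE (N + b) b * qbinE (K + c) c * qbinE N d * qbinE K e * qbinE K f

/-- summand of the left side, `x` is an offset -/
noncomputable def fT (x i j k L M : ℤ) (p : ℤ × ℤ × ℤ) : RatFunc ℚ :=
  𝐪 ^ (triZ (i + j + k - p.1 - p.2.1 - p.2.2 + x) + triZ p.1 + triZ p.2.1 + triZ p.2.2) *
    core (L - (i + j + k - p.1 - p.2.1 - p.2.2 + x)) (M - (i + j + k - p.1 - p.2.1 - p.2.2 + x))
      (i - p.1 - p.2.1) (j - p.1 - p.2.2) (k - p.2.1 - p.2.2) p.1 p.2.1 p.2.2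

lemma fT_eq {x i j k L M d e f S N K a b c : ℤ} (w : ℤ)
    (hS : i + j + k - d - e - f + x = S) (hN : L - S = N) (hK : M - S = K)
    (ha : i - d - e = a) (hb : j - d - f = b) (hc : k - e - f = c)
    (hw : triZ S + triZ d + triZ e + triZ f = w) :
    fT x i j k L M (d, e, f) = 𝐪 ^ w * core N K a b c d e f := by
  subst hS hN hK ha hb hc hw
  rfl

lemma core_L (N K a b c d e f : ℤ) :
    core (N - 1) K a b c d e f + 𝐪 ^ (N - d) * core (N - 1) K a b c (d - 1) e f =
    core N K a b c d e f - 𝐪 ^ N * core N K (a - 1) b c d e f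
      - 𝐪 ^ N * core N K a (b - 1) c d e f + 𝐪 ^ N * 𝐪 ^ N * core N K (a - 1) (b - 1) c d e f := by
  unfold core
  have h1 := pascal1 (N + a) a
  have h2 := pascal1 (N + b) b
  have h3 := pascal1 N d
  rw [add_sub_cancel_right] at h1 h2
  rw [show N - 1 + a = N + a - 1 by ring, show N - 1 + b = N + b - 1 by ring,
    show N + (a - 1) = N + a - 1 by ring, show N + (b - 1) = N + b - 1 by ring, h1, h2, h3]
  ring

lemma core_M (N K a b c d e f : ℤ) :
    core N (K - 1) a b c d e f + 𝐪 ^ (K - e) * core N (K - 1) a b c d (e - 1) f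
      + 𝐪 ^ (K - f) * core N (K - 1) a b c d e (f - 1)
      + 𝐪 ^ (K - e) * 𝐪 ^ (K - f) * core N (K - 1) a b c d (e - 1) (f - 1) =
    core N K a b c d e f - 𝐪 ^ K * core N K a b (c - 1) d e f := by
  unfold core
  have h1 := pascal1 (K + c) c
  have h2 := pascal1 K e
  have h3 := pascal1 K f
  rw [add_sub_cancel_right] at h1
  rw [show K - 1 + c = K + c - 1 by ring,
    show K + (c - 1) = K + c - 1 by ring, h1, h2, h3]
  ring

lemma fT_L (x i j k L M d e f : ℤ) :
    fT x i j k (L - 1) M (d, e, f) + 𝐪 ^ L * fT x (i - 1) (j - 1) k (L - 2) (M - 1) (d - 1, e, f) =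
    fT x i j k L M (d, e, f) - 𝐪 ^ L * fT x (i - 1) j k (L - 1) (M - 1) (d, e, f)
      - 𝐪 ^ L * fT x i (j - 1) k (L - 1) (M - 1) (d, e, f)
      + 𝐪 ^ (2 * L - 1) * fT x (i - 1) (j - 1) k (L - 2) (M - 2) (d, e, f) := by
  obtain ⟨S, hS⟩ : ∃ S, i + j + k - d - e - f + x = S := ⟨_, rfl⟩
  obtain ⟨N, hN⟩ : ∃ N, L - S = N := ⟨_, rfl⟩
  obtain ⟨K, hK⟩ : ∃ N, M - S = N := ⟨_, rfl⟩
  obtain ⟨a, ha⟩ : ∃ N, i - d - e = N := ⟨_, rfl⟩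
  obtain ⟨b, hb⟩ : ∃ N, j - d - f = N := ⟨_, rfl⟩
  obtain ⟨c, hc⟩ : ∃ N, k - e - f = N := ⟨_, rfl⟩
  obtain ⟨w, hw⟩ : ∃ w, triZ S + triZ d + triZ e + triZ f = w := ⟨_, rfl⟩
  have t1 := triZ_sub_one S
  have t2 := triZ_sub_one (S - 1)
  rw [show S - 1 - 1 = S - 2 by ring] at t2
  have t3 := triZ_sub_one d
  rw [fT_eq (S := S) (N := N - 1) (K := K) (a := a) (b := b) (c := c) w (by omega) (by omega)
      (by omega) (by omega) (by omega) (by omega) (by omega),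
    fT_eq (S := S - 1) (N := N - 1) (K := K) (a := a) (b := b) (c := c) (w - S - d) (by omega)
      (by omega) (by omega) (by omega) (by omega) (by omega) (by omega),
    fT_eq (S := S) (N := N) (K := K) (a := a) (b := b) (c := c) w (by omega) (by omega)
      (by omega) (by omega) (by omega) (by omega) (by omega),
    fT_eq (S := S - 1) (N := N) (K := K) (a := a - 1) (b := b) (c := c) (w - S) (by omega)
      (by omega) (by omega) (by omega) (by omega) (by omega) (by omega),
    fT_eq (S := S - 1) (N := N) (K := K) (a := a) (b := b - 1) (c := c) (w - S) (by omega)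
      (by omega) (by omega) (by omega) (by omega) (by omega) (by omega),
    fT_eq (S := S - 2) (N := N) (K := K) (a := a - 1) (b := b - 1) (c := c) (w - S - S + 1)
      (by omega) (by omega) (by omega) (by omega) (by omega) (by omega) (by omega)]
  simp only [← mul_assoc, ← zpow_add₀ qq_ne]
  rw [show L + (w - S - d) = w + (N - d) by omega, show L + (w - S) = w + N by omega,
    show 2 * L - 1 + (w - S - S + 1) = w + (N + N) by omega]
  simp only [zpow_add₀ qq_ne w, zpow_add₀ qq_ne N N]
  linear_combination 𝐪 ^ w * core_L N K a b c d e f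

lemma fT_M (x i j k L M d e f : ℤ) :
    fT x i j k L (M - 1) (d, e, f)
      + 𝐪 ^ M * fT x (i - 1) j (k - 1) (L - 1) (M - 2) (d, e - 1, f)
      + 𝐪 ^ M * fT x i (j - 1) (k - 1) (L - 1) (M - 2) (d, e, f - 1)
      + 𝐪 ^ (2 * M - 1) * fT x (i - 1) (j - 1) (k - 2) (L - 2) (M - 3) (d, e - 1, f - 1) =
    fT x i j k L M (d, e, f) - 𝐪 ^ M * fT x i j (k - 1) (L - 1) (M - 1) (d, e, f) := by
  obtain ⟨S, hS⟩ : ∃ S, i + j + k - d - e - f + x = S := ⟨_, rfl⟩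
  obtain ⟨N, hN⟩ : ∃ N, L - S = N := ⟨_, rfl⟩
  obtain ⟨K, hK⟩ : ∃ N, M - S = N := ⟨_, rfl⟩
  obtain ⟨a, ha⟩ : ∃ N, i - d - e = N := ⟨_, rfl⟩
  obtain ⟨b, hb⟩ : ∃ N, j - d - f = N := ⟨_, rfl⟩
  obtain ⟨c, hc⟩ : ∃ N, k - e - f = N := ⟨_, rfl⟩
  obtain ⟨w, hw⟩ : ∃ w, triZ S + triZ d + triZ e + triZ f = w := ⟨_, rfl⟩
  have t1 := triZ_sub_one S
  have t2 := triZ_sub_one (S - 1)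
  rw [show S - 1 - 1 = S - 2 by ring] at t2
  have t3 := triZ_sub_one e
  have t4 := triZ_sub_one f
  rw [fT_eq (S := S) (N := N) (K := K - 1) (a := a) (b := b) (c := c) w (by omega) (by omega)
      (by omega) (by omega) (by omega) (by omega) (by omega),
    fT_eq (S := S - 1) (N := N) (K := K - 1) (a := a) (b := b) (c := c) (w - S - e) (by omega)
      (by omega) (by omega) (by omega) (by omega) (by omega) (by omega),
    fT_eq (S := S - 1) (N := N) (K := K - 1) (a := a) (b := b) (c := c) (w - S - f) (by omega)
      (by omega) (by omega) (by omega) (by omega) (by omega) (by omega),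
    fT_eq (S := S - 2) (N := N) (K := K - 1) (a := a) (b := b) (c := c) (w - S - S + 1 - e - f)
      (by omega) (by omega) (by omega) (by omega) (by omega) (by omega) (by omega),
    fT_eq (S := S) (N := N) (K := K) (a := a) (b := b) (c := c) w (by omega) (by omega)
      (by omega) (by omega) (by omega) (by omega) (by omega),
    fT_eq (S := S - 1) (N := N) (K := K) (a := a) (b := b) (c := c - 1) (w - S) (by omega)
      (by omega) (by omega) (by omega) (by omega) (by omega) (by omega)]
  simp only [← mul_assoc, ← zpow_add₀ qq_ne]
  rw [show M + (w - S - e) = w + (K - e) by omega, show M + (w - S - f) = w + (K - f) by omega,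
    show M + (w - S) = w + K by omega,
    show 2 * M - 1 + (w - S - S + 1 - e - f) = w + ((K - e) + (K - f)) by omega]
  simp only [zpow_add₀ qq_ne w, zpow_add₀ qq_ne (K - e) (K - f)]
  linear_combination 𝐪 ^ w * core_M N K a b c d e f

lemma fT_support {x i j k L M : ℤ} {p : ℤ × ℤ × ℤ} (h : fT x i j k L M p ≠ 0) :
    0 ≤ p.1 ∧ 0 ≤ p.2.1 ∧ 0 ≤ p.2.2 ∧ 0 ≤ i - p.1 - p.2.1 ∧ 0 ≤ j - p.1 - p.2.2 ∧
      0 ≤ k - p.2.1 - p.2.2 := by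
  contrapose! h
  unfold fT core
  by_cases h1 : p.1 < 0
  · simp [qbinE_neg _ h1]
  by_cases h2 : p.2.1 < 0
  · simp [qbinE_neg _ h2]
  by_cases h3 : p.2.2 < 0
  · simp [qbinE_neg _ h3]
  by_cases h4 : i - p.1 - p.2.1 < 0
  · simp [qbinE_neg _ h4]
  by_cases h5 : j - p.1 - p.2.2 < 0
  · simp [qbinE_neg _ h5]
  simp [qbinE_neg _ (h (by omega) (by omega) (by omega) (by omega) (by omega))]

lemma fT_fin (x i j k L M : ℤ) : (Function.support (fT x i j k L M)).Finite := by
  apply (Set.finite_Icc ((0, 0, 0) : ℤ × ℤ × ℤ) (i, i, j)).subset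
  intro p hp
  have := fT_support hp
  simp only [Set.mem_Icc, Prod.le_def]
  omega

noncomputable def gG (x i j k L M : ℤ) : RatFunc ℚ := ∑ᶠ p, fT x i j k L M p

lemma lin5 {ι : Type*} {f0 f1 f2 f3 f4 f5 : ι → RatFunc ℚ} (c1 c2 c3 c4 c5 : RatFunc ℚ)
    (h1 : (Function.support f1).Finite) (h2 : (Function.support f2).Finite)
    (h3 : (Function.support f3).Finite) (h4 : (Function.support f4).Finite)
    (h5 : (Function.support f5).Finite)
    (h : ∀ p, f0 p = c1 * f1 p + c2 * f2 p + c3 * f3 p + c4 * f4 p + c5 * f5 p) :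
    ∑ᶠ p, f0 p = c1 * ∑ᶠ p, f1 p + c2 * ∑ᶠ p, f2 p + c3 * ∑ᶠ p, f3 p + c4 * ∑ᶠ p, f4 p
      + c5 * ∑ᶠ p, f5 p := by
  have hs : ∀ (c : RatFunc ℚ) (f : ι → RatFunc ℚ), (Function.support f).Finite →
      (Function.support fun p => c * f p).Finite := fun c f hf =>
    hf.subset (fun p hp => right_ne_zero_of_mul hp)
  have ha : ∀ (f g : ι → RatFunc ℚ), (Function.support f).Finite → (Function.support g).Finite →
      (Function.support fun p => f p + g p).Finite := fun f g hf hg =>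
    (hf.union hg).subset (Function.support_add f g)
  have k1 := hs c1 f1 h1
  have k2 := hs c2 f2 h2
  have k3 := hs c3 f3 h3
  have k4 := hs c4 f4 h4
  have k5 := hs c5 f5 h5
  have k12 := ha _ _ k1 k2
  have k123 := ha _ _ k12 k3
  have k1234 := ha _ _ k123 k4
  rw [finsum_congr h, finsum_add_distrib k1234 k5, finsum_add_distrib k123 k4,
    finsum_add_distrib k12 k3, finsum_add_distrib k1 k2, mul_finsum' _ _ h1, mul_finsum' _ _ h2,
    mul_finsum' _ _ h3, mul_finsum' _ _ h4, mul_finsum' _ _ h5]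

/-- translation of `ℤ³` -/
def tr3 (u v w : ℤ) : ℤ × ℤ × ℤ ≃ ℤ × ℤ × ℤ where
  toFun p := (p.1 - u, p.2.1 - v, p.2.2 - w)
  invFun p := (p.1 + u, p.2.1 + v, p.2.2 + w)
  left_inv p := by simp
  right_inv p := by simp

lemma fT_fin' (x i j k L M u v w : ℤ) :
    (Function.support fun p : ℤ × ℤ × ℤ => fT x i j k L M (p.1 - u, p.2.1 - v, p.2.2 - w)).Finite :=
  (fT_fin x i j k L M).preimage ((tr3 u v w).injective.injOn)

lemma gG_shift (x i j k L M u v w : ℤ) :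
    ∑ᶠ p : ℤ × ℤ × ℤ, fT x i j k L M (p.1 - u, p.2.1 - v, p.2.2 - w) = gG x i j k L M :=
  finsum_comp_equiv (tr3 u v w) (f := fT x i j k L M)

/-- recurrence operators -/
def RecL (F : ℤ → ℤ → ℤ → ℤ → ℤ → RatFunc ℚ) (i j k : ℤ) : Prop := ∀ L M : ℤ,
  F i j k L M = F i j k (L - 1) M + 𝐪 ^ L * F (i - 1) (j - 1) k (L - 2) (M - 1)
    + 𝐪 ^ L * F (i - 1) j k (L - 1) (M - 1) + 𝐪 ^ L * F i (j - 1) k (L - 1) (M - 1)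
    - 𝐪 ^ (2 * L - 1) * F (i - 1) (j - 1) k (L - 2) (M - 2)

def RecM (F : ℤ → ℤ → ℤ → ℤ → ℤ → RatFunc ℚ) (i j k : ℤ) : Prop := ∀ L M : ℤ,
  F i j k L M = F i j k L (M - 1) + 𝐪 ^ M * F (i - 1) j (k - 1) (L - 1) (M - 2)
    + 𝐪 ^ M * F i (j - 1) (k - 1) (L - 1) (M - 2)
    + 𝐪 ^ (2 * M - 1) * F (i - 1) (j - 1) (k - 2) (L - 2) (M - 3)
    + 𝐪 ^ M * F i j (k - 1) (L - 1) (M - 1)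

lemma gG_L (x i j k : ℤ) : RecL (gG x) i j k := by
  intro L M
  have := lin5 (f0 := fT x i j k L M) (f1 := fT x i j k (L - 1) M)
    (f2 := fun p => fT x (i - 1) (j - 1) k (L - 2) (M - 1) (p.1 - 1, p.2.1 - 0, p.2.2 - 0))
    (f3 := fT x (i - 1) j k (L - 1) (M - 1)) (f4 := fT x i (j - 1) k (L - 1) (M - 1))
    (f5 := fT x (i - 1) (j - 1) k (L - 2) (M - 2))
    1 (𝐪 ^ L) (𝐪 ^ L) (𝐪 ^ L) (- 𝐪 ^ (2 * L - 1))
    (fT_fin ..) (fT_fin' ..) (fT_fin ..) (fT_fin ..) (fT_fin ..)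
    (by rintro ⟨d, e, f⟩
        have := fT_L x i j k L M d e f
        simp only [sub_zero]
        linear_combination -this)
  rw [gG_shift] at this
  simp only [gG] at this ⊢
  rw [this]
  ring

lemma gG_M (x i j k : ℤ) : RecM (gG x) i j k := by
  intro L M
  have := lin5 (f0 := fT x i j k L M) (f1 := fT x i j k L (M - 1))
    (f2 := fun p => fT x (i - 1) j (k - 1) (L - 1) (M - 2) (p.1 - 0, p.2.1 - 1, p.2.2 - 0))
    (f3 := fun p => fT x i (j - 1) (k - 1) (L - 1) (M - 2) (p.1 - 0, p.2.1 - 0, p.2.2 - 1))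
    (f4 := fun p => fT x (i - 1) (j - 1) (k - 2) (L - 2) (M - 3) (p.1 - 0, p.2.1 - 1, p.2.2 - 1))
    (f5 := fT x i j (k - 1) (L - 1) (M - 1))
    1 (𝐪 ^ M) (𝐪 ^ M) (𝐪 ^ (2 * M - 1)) (𝐪 ^ M)
    (fT_fin ..) (fT_fin' ..) (fT_fin' ..) (fT_fin' ..) (fT_fin ..)
    (by rintro ⟨d, e, f⟩
        have := fT_M x i j k L M d e f
        simp only [sub_zero]
        linear_combination -this)
  rw [gG_shift, gG_shift, gG_shift] at this
  simp only [gG] at this ⊢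
  rw [this]
  ring

noncomputable def lhs (i j k L M : ℤ) : RatFunc ℚ :=
  gG 0 i j k L M + gG 2 (i - 1) (j - 1) (k - 1) L M

lemma lhs_L (i j k : ℤ) : RecL lhs i j k := by
  intro L M
  unfold lhs
  rw [gG_L 0 i j k L M, gG_L 2 (i - 1) (j - 1) (k - 1) L M]
  ring

lemma lhs_M (i j k : ℤ) : RecM lhs i j k := by
  intro L M
  unfold lhs
  rw [gG_M 0 i j k L M, gG_M 2 (i - 1) (j - 1) (k - 1) L M,
    show k - 1 - 2 = k - 2 - 1 by ring]
  ring

/-- multinomial part of the right side -/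
noncomputable def cC (i j L t : ℤ) : RatFunc ℚ :=
  pP (L - i - j) (i + j - t) * gInv t * gInv (i - t) * gInv (j - t)

lemma cC_eq (i j L t : ℤ) :
    qbinE (L - t) t * qbinE (L - 2 * t) (i - t) * qbinE (L - i - t) (j - t) = cC i j L t := by
  unfold cC
  simp only [qbinE_eq]
  by_cases h1 : t < 0
  · simp [gInv_neg h1]
  by_cases h2 : i - t < 0
  · simp [gInv_neg h2]
  by_cases h3 : j - t < 0
  · simp [gInv_neg h3]
  have e1 := pP_add' (L - i - j) (r := j - t) (s := i - t) (by omega) (by omega)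
  have e2 := pP_add' (L - i - j) (r := j - t + (i - t)) (s := t) (by omega) (by omega)
  rw [show i + j - t = j - t + (i - t) + t by ring, e2, e1,
    show L - t - t = L - i - j + (j - t + (i - t)) by ring,
    show L - 2 * t - (i - t) = L - i - j + (j - t) by ring,
    show L - i - t - (j - t) = L - i - j by ring]
  ring

noncomputable def rT (i j k L M t : ℤ) : RatFunc ℚ :=
  𝐪 ^ (t * (M + 2) - triZ t + triZ (i - t) + triZ (j - t) + triZ (k - t)) * cC i j L t *
    qbinE (M - i - j) (k - t)

lemma cC_support {i j L t : ℤ} (h : cC i j L t ≠ 0) : 0 ≤ t ∧ t ≤ i ∧ t ≤ j := by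
  contrapose! h
  unfold cC
  by_cases h1 : t < 0
  · simp [gInv_neg h1]
  by_cases h2 : i - t < 0
  · simp [gInv_neg h2]
  simp [gInv_neg (show j - t < 0 by have := h (by omega) (by omega); omega)]

lemma rT_fin_aux (i j L : ℤ) (f : ℤ → RatFunc ℚ) (h : ∀ t, cC i j L t = 0 → f t = 0) :
    (Function.support f).Finite := by
  apply (Set.finite_Icc (0 : ℤ) i).subset
  intro p hp
  have : cC i j L p ≠ 0 := fun h' => hp (h p h')
  have := cC_support this
  simp only [Set.mem_Icc]
  omega

lemma rT_fin (i j k L M : ℤ) : (Function.support (rT i j k L M)).Finite :=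
  rT_fin_aux i j L _ fun t h => by simp [rT, h]

noncomputable def rhs (i j k L M : ℤ) : RatFunc ℚ := ∑ᶠ t, rT i j k L M t

lemma rT_eq {i j k L M t m r : ℤ} (w : ℤ)
    (hw : t * (M + 2) - triZ t + triZ (i - t) + triZ (j - t) + triZ (k - t) = w)
    (hm : M - i - j = m) (hr : k - t = r) :
    rT i j k L M t = 𝐪 ^ w * cC i j L t * qbinE m r := by
  subst hw hm hr; rfl

lemma cC_all {i j : ℤ} (hi : 0 ≤ i) (hj : 0 ≤ j) (hij : 0 < i + j) (L t : ℤ) :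
    ∃ Y : RatFunc ℚ, cC i j L t = Y * (1 - 𝐪 ^ (L - t)) ∧
      cC i j (L - 1) t = Y * (1 - 𝐪 ^ (L - i - j)) ∧
      cC (i - 1) j (L - 1) t = Y * (1 - 𝐪 ^ (i - t)) ∧
      cC i (j - 1) (L - 1) t = Y * (1 - 𝐪 ^ (j - t)) ∧
      cC (i - 1) (j - 1) (L - 2) (t - 1) = Y * (1 - 𝐪 ^ t) ∧
      (1 - 𝐪 ^ (t + 1)) * cC i j L (t + 1) = Y * (1 - 𝐪 ^ (i - t)) * (1 - 𝐪 ^ (j - t)) ∧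
      (1 - 𝐪 ^ (L - 1 - t)) * cC (i - 1) (j - 1) (L - 2) t =
        Y * (1 - 𝐪 ^ (i - t)) * (1 - 𝐪 ^ (j - t)) := by
  refine ⟨pP (L - i - j) (i + j - t - 1) * gInv t * gInv (i - t) * gInv (j - t), ?_⟩
  unfold cC
  have g1 := gInv_rec (i - t)
  have g2 := gInv_rec (j - t)
  have g3 := gInv_rec t
  have g4 := gInv_rec (t + 1)
  rw [add_sub_cancel_right] at g4
  rw [show i - 1 - t = i - t - 1 by ring, show j - 1 - t = j - t - 1 by ring,
    show i - (t + 1) = i - t - 1 by ring, show j - (t + 1) = j - t - 1 by ring,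
    show i - 1 - (t - 1) = i - t by ring, show j - 1 - (t - 1) = j - t by ring, g1, g2, g3, g4]
  by_cases h1 : i - t < 0
  · simp [gInv_neg h1]
  by_cases h2 : j - t < 0
  · simp [gInv_neg h2]
  have e1 := pP_right (L - i - j) (r := i + j - t - 1) (by omega)
  have e2 := pP_left (L - 1 - i - j) (r := i + j - t - 1) (by omega)
  rw [sub_add_cancel] at e1 e2
  rw [show L - i - j + (i + j - t - 1) + 1 = L - t by ring] at e1
  rw [show L - 1 - i - j + 1 = L - i - j by ring] at e2
  rw [e1, e2, show L - 1 - (i - 1) - j = L - i - j by ring,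
    show L - 1 - i - (j - 1) = L - i - j by ring,
    show L - 2 - (i - 1) - (j - 1) = L - i - j by ring,
    show i - 1 + j - t = i + j - t - 1 by ring, show i + (j - 1) - t = i + j - t - 1 by ring,
    show i - 1 + (j - 1) - (t - 1) = i + j - t - 1 by ring,
    show i + j - (t + 1) = i + j - t - 1 by ring]
  refine ⟨by ring, by ring, by ring, by ring, by ring, by ring, ?_⟩
  by_cases h3 : i = t
  · subst h3; simp
  by_cases h4 : j = t
  · subst h4; simp
  have e3 := pP_right (L - i - j) (r := i + j - t - 1 - 1) (by omega)
  rw [sub_add_cancel] at e3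
  rw [e3, show i - 1 + (j - 1) - t = i + j - t - 1 - 1 by ring,
    show L - i - j + (i + j - t - 1 - 1) + 1 = L - 1 - t by ring]
  ring

lemma rhs_M {i j : ℤ} (hi : 0 ≤ i) (hj : 0 ≤ j) (hij : 0 < i + j) (k : ℤ) : RecM rhs i j k := by
  intro L M
  let w : ℤ → ℤ := fun t => t * (M + 2) - triZ t + triZ (i - t) + triZ (j - t) + triZ (k - t)
  let U : ℤ → RatFunc ℚ := fun t =>
    𝐪 ^ (w t - t) * (𝐪 ^ t - 1) * cC i j L t * qbinE (M - 1 - i - j) (k - t)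
  let V : ℤ → RatFunc ℚ := fun t =>
    𝐪 ^ (w t + M - i - j - k + t) * cC i j L t * qbinE (M - 1 - i - j) (k - t - 1)
  have hU : (Function.support U).Finite := rT_fin_aux i j L _ fun t h => by simp [U, h]
  have hV : (Function.support V).Finite := rT_fin_aux i j L _ fun t h => by simp [V, h]
  have s1 := lin5 (f0 := rT i j k L M) (f1 := rT i j k L (M - 1)) (f2 := U) (f3 := V)
    (f4 := U) (f5 := U) 1 1 1 0 0 (rT_fin ..) hU hV hU hU (by
      intro t
      rw [rT_eq (w t) rfl rfl rfl, rT_eq (i := i) (M := M - 1) (m := M - 1 - i - j) (r := k - t)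
        (w t - t) (by simp only [w]; ring) (by ring) (by ring)]
      have p := pascal1 (M - i - j) (k - t)
      rw [show M - i - j - 1 = M - 1 - i - j by ring] at p
      rw [p]
      simp only [U, V]
      rw [show w t + M - i - j - k + t = w t + (M - i - j - (k - t)) by ring, zpow_add₀ qq_ne (w t),
        sub_eq_add_neg (w t) t, zpow_add₀ qq_ne (w t), zpow_neg]
      have := zpow_ne_zero t qq_ne
      field_simp
      ring)
  have hU' : (Function.support fun t => U (t + 1)).Finite :=
    hU.preimage ((Equiv.addRight (1 : ℤ)).injective.injOn)
  have sU : ∑ᶠ t, U (t + 1) = ∑ᶠ t, U t := finsum_comp_equiv (Equiv.addRight (1 : ℤ)) (f := U)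
  have hX : (Function.support fun t => rT (i - 1) (j - 1) (k - 2) (L - 2) (M - 3) (t - 1)).Finite :=
    (rT_fin ..).preimage ((Equiv.subRight (1 : ℤ)).injective.injOn)
  have sX : ∑ᶠ t, rT (i - 1) (j - 1) (k - 2) (L - 2) (M - 3) (t - 1) =
      ∑ᶠ t, rT (i - 1) (j - 1) (k - 2) (L - 2) (M - 3) t :=
    finsum_comp_equiv (Equiv.subRight (1 : ℤ)) (f := rT (i - 1) (j - 1) (k - 2) (L - 2) (M - 3))
  have s2 := lin5 (f0 := fun t => U (t + 1)) (f1 := V)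
    (f2 := rT (i - 1) j (k - 1) (L - 1) (M - 2)) (f3 := rT i (j - 1) (k - 1) (L - 1) (M - 2))
    (f4 := fun t => rT (i - 1) (j - 1) (k - 2) (L - 2) (M - 3) (t - 1))
    (f5 := rT i j (k - 1) (L - 1) (M - 1))
    (-1) (𝐪 ^ M) (𝐪 ^ M) (𝐪 ^ (2 * M - 1)) (𝐪 ^ M) hV (rT_fin ..) (rT_fin ..) hX (rT_fin ..) (by
      intro t
      obtain ⟨Y, c1, c2, c3, c4, c5, c6, -⟩ := cC_all hi hj hij L t
      have ti := triZ_sub_one (i - t)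
      have tj := triZ_sub_one (j - t)
      have tk := triZ_sub_one (k - t)
      have tt := triZ_sub_one t
      have tt' := triZ_sub_one (t + 1)
      rw [add_sub_cancel_right] at tt'
      obtain ⟨W, hW⟩ : ∃ W, w t + M - i - j - k + t = W := ⟨_, rfl⟩
      have hw : t * (M + 2) - triZ t + triZ (i - t) + triZ (j - t) + triZ (k - t) = w t := rfl
      rw [rT_eq (i := i - 1) (m := M - 1 - i - j) (r := k - t - 1) (W + (j - t) - M)
          (by rw [show i - 1 - t = i - t - 1 by ring, show k - 1 - t = k - t - 1 by ring]
              linarith) (by ring) (by ring),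
        rT_eq (j := j - 1) (m := M - 1 - i - j) (r := k - t - 1) (W + (i - t) - M)
          (by rw [show j - 1 - t = j - t - 1 by ring, show k - 1 - t = k - t - 1 by ring]
              linarith) (by ring) (by ring),
        rT_eq (m := M - 1 - i - j) (r := k - t - 1) (W + (i - t) + (j - t) - (2 * M - 1))
          (by rw [show i - 1 - (t - 1) = i - t by ring, show j - 1 - (t - 1) = j - t by ring,
                show k - 2 - (t - 1) = k - t - 1 by ring]
              linarith) (by ring) (by ring),
        rT_eq (i := i) (j := j) (m := M - 1 - i - j) (r := k - t - 1)
          (W + (i - t) + (j - t) + t - M)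
          (by rw [show k - 1 - t = k - t - 1 by ring]
              linarith) (by ring) (by ring)]
      have hu : w (t + 1) - (t + 1) = W := by
        simp only [w]
        rw [show i - (t + 1) = i - t - 1 by ring, show j - (t + 1) = j - t - 1 by ring,
          show k - (t + 1) = k - t - 1 by ring]
        linarith
      simp only [U, V]
      rw [hu, hW, show k - (t + 1) = k - t - 1 by ring]
      simp only [← mul_assoc, ← zpow_add₀ qq_ne]
      rw [add_sub_cancel, add_sub_cancel, add_sub_cancel, add_sub_cancel]
      rw [show L - t = (L - i - j) + (i - t) + (j - t) + t by ring] at c1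
      rw [c1, c2, c3, c4, c5]
      rw [zpow_add₀ qq_ne _ t, zpow_add₀ qq_ne _ t, zpow_add₀ qq_ne _ (j - t),
        zpow_add₀ qq_ne _ (j - t), zpow_add₀ qq_ne _ (j - t), zpow_add₀ qq_ne _ (i - t),
        zpow_add₀ qq_ne _ (i - t)]
      linear_combination (-𝐪 ^ W * qbinE (M - 1 - i - j) (k - t - 1)) * c6)
  rw [sU, sX] at s2
  unfold rhs
  rw [s1, s2]
  ring

lemma rhs_L {i j : ℤ} (hi : 0 ≤ i) (hj : 0 ≤ j) (hij : 0 < i + j) (k : ℤ) : RecL rhs i j k := by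
  intro L M
  let w : ℤ → ℤ := fun t => t * (M + 2) - triZ t + triZ (i - t) + triZ (j - t) + triZ (k - t)
  let U : ℤ → RatFunc ℚ := fun t =>
    𝐪 ^ (w t + (L - i - j) + t) * cC (i - 1) (j - 1) (L - 2) t * qbinE (M - i - j) (k - t)
  let V : ℤ → RatFunc ℚ := fun t =>
    𝐪 ^ (w t + (L - i - j) + t + (M + 1 - i - j - k + t)) * cC (i - 1) (j - 1) (L - 2) t *
      qbinE (M - i - j) (k - t - 1)
  have hU : (Function.support U).Finite := rT_fin_aux (i - 1) (j - 1) (L - 2) _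
    fun t h => by simp [U, h]
  have hV : (Function.support V).Finite := rT_fin_aux (i - 1) (j - 1) (L - 2) _
    fun t h => by simp [V, h]
  have s1 := lin5 (f0 := fun t => 𝐪 ^ L * rT (i - 1) (j - 1) k (L - 2) (M - 1) t)
    (f1 := U) (f2 := V) (f3 := U) (f4 := U) (f5 := U) 1 1 0 0 0 hU hV hU hU hU (by
      intro t
      have ti := triZ_sub_one (i - t)
      have tj := triZ_sub_one (j - t)
      have hw : t * (M + 2) - triZ t + triZ (i - t) + triZ (j - t) + triZ (k - t) = w t := rfl
      rw [rT_eq (m := M + 1 - i - j) (r := k - t) (w t + (L - i - j) + t - L)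
          (by rw [show i - 1 - t = i - t - 1 by ring, show j - 1 - t = j - t - 1 by ring]
              linarith) (by ring) (by ring)]
      have p := pascal1 (M + 1 - i - j) (k - t)
      rw [show M + 1 - i - j - 1 = M - i - j by ring] at p
      rw [p]
      simp only [U, V]
      simp only [← mul_assoc, ← zpow_add₀ qq_ne]
      rw [add_sub_cancel, zpow_add₀ qq_ne _ (M + 1 - i - j - k + t),
        show M + 1 - i - j - k + t = M + 1 - i - j - (k - t) by ring]
      ring)
  rw [← mul_finsum' _ _ (rT_fin ..)] at s1
  have hV' : (Function.support fun t => V (t - 1)).Finite :=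
    hV.preimage ((Equiv.subRight (1 : ℤ)).injective.injOn)
  have sV : ∑ᶠ t, V (t - 1) = ∑ᶠ t, V t := finsum_comp_equiv (Equiv.subRight (1 : ℤ)) (f := V)
  have s2 := lin5 (f0 := fun t => rT i j k L M t - V (t - 1)) (f1 := rT i j k (L - 1) M)
    (f2 := U) (f3 := rT (i - 1) j k (L - 1) (M - 1))
    (f4 := rT i (j - 1) k (L - 1) (M - 1)) (f5 := rT (i - 1) (j - 1) k (L - 2) (M - 2))
    1 1 (𝐪 ^ L) (𝐪 ^ L) (-𝐪 ^ (2 * L - 1)) (rT_fin ..) hU (rT_fin ..) (rT_fin ..) (rT_fin ..) (by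
      intro t
      obtain ⟨Y, c1, c2, c3, c4, c5, -, c7⟩ := cC_all hi hj hij L t
      have ti := triZ_sub_one (i - t)
      have tj := triZ_sub_one (j - t)
      have ti' := triZ_sub_one (i - t + 1)
      have tj' := triZ_sub_one (j - t + 1)
      have tk := triZ_sub_one (k - t + 1)
      have tt := triZ_sub_one t
      rw [add_sub_cancel_right] at ti' tj' tk
      obtain ⟨W, hW⟩ : ∃ W, w t = W := ⟨_, rfl⟩
      have hw : t * (M + 2) - triZ t + triZ (i - t) + triZ (j - t) + triZ (k - t) = w t := rfl
      have hv : w (t - 1) + (L - i - j) + (t - 1) + (M + 1 - i - j - k + (t - 1)) =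
          W + (L - i - j) := by
        simp only [w]
        rw [show i - (t - 1) = i - t + 1 by ring, show j - (t - 1) = j - t + 1 by ring,
          show k - (t - 1) = k - t + 1 by ring]
        linarith
      rw [rT_eq (i := i) (j := j) (L := L) W (by linarith) rfl rfl,
        rT_eq (i := i) (j := j) (L := L - 1) W (by linarith) rfl rfl,
        rT_eq (i := i - 1) (j := j) (m := M - i - j) (r := k - t)
          (W + (L - i - j) + (j - t) + t - L)
          (by rw [show i - 1 - t = i - t - 1 by ring]
              linarith) (by ring) (by ring),
        rT_eq (i := i) (j := j - 1) (m := M - i - j) (r := k - t)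
          (W + (L - i - j) + (i - t) + t - L)
          (by rw [show j - 1 - t = j - t - 1 by ring]
              linarith) (by ring) (by ring),
        rT_eq (i := i - 1) (j := j - 1) (m := M - i - j) (r := k - t)
          (W + (L - i - j) + t + (L - 1 - t) - (2 * L - 1))
          (by rw [show i - 1 - t = i - t - 1 by ring, show j - 1 - t = j - t - 1 by ring]
              linarith) (by ring) (by ring)]
      simp only [U, V]
      rw [hv, hW, show k - (t - 1) - 1 = k - t by ring]
      simp only [← mul_assoc, neg_mul, ← zpow_add₀ qq_ne]
      rw [add_sub_cancel, add_sub_cancel, add_sub_cancel]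
      rw [show L - t = (L - i - j) + (i - t) + (j - t) + t by ring] at c1
      rw [c1, c2, c3, c4, c5]
      rw [zpow_add₀ qq_ne _ (L - 1 - t)]
      simp only [zpow_add₀ qq_ne _ t]
      rw [zpow_add₀ qq_ne _ (j - t), zpow_add₀ qq_ne _ (j - t), zpow_add₀ qq_ne _ (i - t),
        zpow_add₀ qq_ne _ (i - t), zpow_add₀ qq_ne W]
      linear_combination (-𝐪 ^ W * 𝐪 ^ (L - i - j) * 𝐪 ^ t * qbinE (M - i - j) (k - t)) * c7)
  rw [finsum_sub_distrib (rT_fin ..) hV', sV] at s2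
  unfold rhs
  linear_combination s2 - s1

lemma core_ne {N K a b c d e f : ℤ} (h : core N K a b c d e f ≠ 0) :
    ¬ (0 ≤ N + a ∧ N + a < a) ∧ ¬ (0 ≤ N + b ∧ N + b < b) ∧ ¬ (0 ≤ K + c ∧ K + c < c) ∧
    ¬ (0 ≤ N ∧ N < d) ∧ ¬ (0 ≤ K ∧ K < e) ∧ ¬ (0 ≤ K ∧ K < f) := by
  unfold core at h
  refine ⟨?_, ?_, ?_, ?_, ?_, ?_⟩ <;>
  · rintro ⟨h1, h2⟩
    apply h
    rw [qbinE_self_zero h1 h2]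
    simp

lemma core_base {a b c d e f : ℤ} (ha : 0 ≤ a) (hb : 0 ≤ b) (hc : 0 ≤ c) (hd : 0 ≤ d)
    (he : 0 ≤ e) (hf : 0 ≤ f)
    (h : core (d - 1 - c) (d - c) a b c d e f ≠ 0) : a = 0 ∧ b = 0 ∧ e = 0 ∧ f = 0 ∧ c = d := by
  have := core_ne h
  omega

lemma fT_base0 {i j k : ℤ} {p : ℤ × ℤ × ℤ} (h : fT 0 i j k (i + j - 1) (i + j) p ≠ 0) :
    i = j ∧ j = k ∧ p = (i, 0, 0) := by
  have hs := fT_support h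
  obtain ⟨d, e, f⟩ := p
  simp only at hs
  rw [fT_eq (N := d - 1 - (k - e - f)) (K := d - (k - e - f)) _ rfl (by ring) (by ring) rfl rfl rfl
    rfl] at h
  have := core_base (by omega) (by omega) (by omega) (by omega) (by omega) (by omega)
    (right_ne_zero_of_mul h)
  simp only [Prod.mk.injEq]
  omega

lemma fT_base2 {i j k : ℤ} {p : ℤ × ℤ × ℤ}
    (h : fT 2 (i - 1) (j - 1) (k - 1) (i + j - 1) (i + j) p ≠ 0) :
    i = j ∧ j = k ∧ p = (i - 1, 0, 0) := by
  have hs := fT_support h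
  obtain ⟨d, e, f⟩ := p
  simp only at hs
  rw [fT_eq (N := d - 1 - (k - 1 - e - f)) (K := d - (k - 1 - e - f)) _ rfl (by ring) (by ring)
    rfl rfl rfl rfl] at h
  have := core_base (by omega) (by omega) (by omega) (by omega) (by omega) (by omega)
    (right_ne_zero_of_mul h)
  simp only [Prod.mk.injEq]
  omega

lemma base_cancel {n : ℤ} (h : 0 < n) :
    𝐪 ^ n * core (-1) 0 0 0 n n 0 0 + core (-1) 0 0 0 (n - 1) (n - 1) 0 0 = 0 := by
  unfold core
  simp only [qbinE_zero, one_mul, mul_one, zero_add]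
  have e1 := pP_right 0 (r := n - 1) (by omega)
  have e2 := pP_left (-1 - n) (r := n - 1) (by omega)
  rw [sub_add_cancel] at e1 e2
  rw [qbinE_eq n n, qbinE_eq (-1) n, qbinE_eq (n - 1) (n - 1), qbinE_eq (-1) (n - 1), gInv_rec,
    sub_self, sub_self, e1, e2, show (0 : ℤ) + (n - 1) + 1 = n by ring,
    show -1 - n + 1 = -n by ring, show -1 - (n - 1) = - n by ring, zpow_neg]
  have := zpow_ne_zero n qq_ne
  field_simp
  ring

lemma lhs_base (i j k : ℤ) (hi : 0 ≤ i) (hij : 0 < i + j) :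
    lhs i j k (i + j - 1) (i + j) = 0 := by
  unfold lhs gG
  by_cases h : i = j ∧ j = k
  · obtain ⟨rfl, rfl⟩ := h
    rw [finsum_eq_single _ (i, 0, 0) (fun p hp => by
        by_contra h'; exact hp (fT_base0 h').2.2),
      finsum_eq_single _ (i - 1, 0, 0) (fun p hp => by
        by_contra h'; exact hp (fT_base2 h').2.2)]
    have t := triZ_sub_one i
    rw [fT_eq (S := i + i) (N := -1) (K := 0) (a := 0) (b := 0) (c := i)
        (triZ (i + i) + triZ (i - 1) + triZ 0 + triZ 0 + i)
        (by ring) (by ring) (by ring) (by ring) (by ring) (by ring) (by omega),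
      fT_eq (S := i + i) (N := -1) (K := 0) (a := 0) (b := 0) (c := i - 1)
        (triZ (i + i) + triZ (i - 1) + triZ 0 + triZ 0)
        (by ring) (by ring) (by ring) (by ring) (by ring) (by ring) rfl, zpow_add₀ qq_ne _ i]
    linear_combination 𝐪 ^ (triZ (i + i) + triZ (i - 1) + triZ 0 + triZ 0) *
      base_cancel (show 0 < i by omega)
  · have z0 : ∀ p, fT 0 i j k (i + j - 1) (i + j) p = 0 := fun p => by
      by_contra h'
      have := fT_base0 h'
      exact h ⟨this.1, this.2.1⟩
    have z2 : ∀ p, fT 2 (i - 1) (j - 1) (k - 1) (i + j - 1) (i + j) p = 0 := fun p => by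
      by_contra h'
      have := fT_base2 h'
      exact h ⟨this.1, this.2.1⟩
    simp [z0, z2]

lemma rhs_base (i j k M : ℤ) (hi : 0 ≤ i) (hj : 0 ≤ j) (hij : 0 < i + j) :
    rhs i j k (i + j - 1) M = 0 := by
  have z : ∀ t, rT i j k (i + j - 1) M t = 0 := fun t => by
    have : cC i j (i + j - 1) t = 0 := by
      by_contra h
      have hs := cC_support h
      apply h
      unfold cC
      have e := pP_left (i + j - 1 - i - j) (r := i + j - t - 1) (by omega)
      rw [sub_add_cancel] at e
      rw [e, show i + j - 1 - i - j + 1 = 0 by ring]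
      simp
    simp [rT, this]
  simp [rhs, z]

lemma zero_case (k L M : ℤ) : lhs 0 0 k L M = rhs 0 0 k L M := by
  unfold lhs gG rhs
  have z2 : ∀ p, fT 2 (0 - 1) (0 - 1) (k - 1) L M p = 0 := fun p => by
    by_contra h'
    have := fT_support h'
    omega
  rw [finsum_eq_single _ (0, 0, 0) (fun p hp => by
      by_contra h'
      have := fT_support h'
      apply hp
      obtain ⟨d, e, f⟩ := p
      simp only [Prod.mk.injEq] at this ⊢
      omega),
    finsum_eq_single (rT 0 0 k L M) 0 (fun t ht => by
      by_contra h'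
      have : cC 0 0 L t ≠ 0 := fun h => h' (by simp [rT, h])
      have := cC_support this
      omega)]
  rw [finsum_congr z2, finsum_zero]
  simp [fT, rT, core, cC, qbinE_zero, pP_zero, gInv_zero, triZ]

lemma neg_case {i j k : ℤ} (h : i < 0 ∨ j < 0 ∨ k < 0) (L M : ℤ) :
    lhs i j k L M = rhs i j k L M := by
  unfold lhs gG rhs
  have z0 : ∀ p, fT 0 i j k L M p = 0 := fun p => by
    by_contra h'
    have := fT_support h'
    omega
  have z2 : ∀ p, fT 2 (i - 1) (j - 1) (k - 1) L M p = 0 := fun p => by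
    by_contra h'
    have := fT_support h'
    omega
  have z : ∀ t, rT i j k L M t = 0 := fun t => by
    by_contra h'
    have h1 : cC i j L t ≠ 0 := fun h => h' (by simp [rT, h])
    have := cC_support h1
    apply h'
    unfold rT
    rw [qbinE_neg _ (show k - t < 0 by omega), mul_zero]
  simp [z0, z2, z]

lemma int_const {f : ℤ → RatFunc ℚ} (h : ∀ x, f x = f (x - 1)) (x y : ℤ) : f x = f y := by
  have h0 : ∀ x, f x = f 0 := by
    intro x
    induction x using Int.induction_on with
    | zero => rfl
    | succ n ih => rw [h, add_sub_cancel_right, ih]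
    | pred n ih => rw [← h, ih]
  rw [h0 x, h0 y]

lemma main_ind (n : ℕ) : ∀ i j k : ℤ, i + j + k < n → ∀ L M, lhs i j k L M = rhs i j k L M := by
  induction n with
  | zero =>
    intro i j k h L M
    exact neg_case (by simp at h; omega) L M
  | succ n ih =>
    intro i j k h L M
    push_cast at h
    by_cases hn : i < 0 ∨ j < 0 ∨ k < 0
    · exact neg_case hn L M
    by_cases hij : i + j = 0
    · obtain rfl : i = 0 := by omega
      obtain rfl : j = 0 := by omega
      exact zero_case k L M
    have hi : 0 ≤ i := by omega
    have hj : 0 ≤ j := by omega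
    have hij' : 0 < i + j := by omega
    have sL : ∀ L M, lhs i j k L M - rhs i j k L M = lhs i j k (L - 1) M - rhs i j k (L - 1) M := by
      intro L M
      rw [lhs_L i j k L M, rhs_L hi hj hij' k L M,
        ih (i - 1) (j - 1) k (by omega), ih (i - 1) j k (by omega), ih i (j - 1) k (by omega),
        ih (i - 1) (j - 1) k (by omega)]
      ring
    have sM : ∀ L M, lhs i j k L M - rhs i j k L M = lhs i j k L (M - 1) - rhs i j k L (M - 1) := by
      intro L M
      rw [lhs_M i j k L M, rhs_M hi hj hij' k L M,
        ih (i - 1) (j - 1) (k - 2) (by omega), ih (i - 1) j (k - 1) (by omega),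
        ih i (j - 1) (k - 1) (by omega), ih i j (k - 1) (by omega)]
      ring
    have e1 := int_const (f := fun L => lhs i j k L M - rhs i j k L M) (fun L => sL L M)
      L (i + j - 1)
    have e2 := int_const (f := fun M => lhs i j k (i + j - 1) M - rhs i j k (i + j - 1) M)
      (fun M => sM _ M) M (i + j)
    rw [e2, lhs_base i j k hi hij', rhs_base i j k _ hi hj hij', sub_zero] at e1
    exact sub_eq_zero.mp e1

lemma main_eq (i j k L M : ℤ) : lhs i j k L M = rhs i j k L M :=
  main_ind (i + j + k + 1).toNat i j k (by omega) L M

lemma curry6 (g : ℕ × ℕ × ℕ × ℕ × ℕ × ℕ → RatFunc ℚ) (hg : (Function.support g).Finite) :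
    ∑ᶠ (a : ℕ) (b : ℕ) (c : ℕ) (d : ℕ) (e : ℕ) (f : ℕ), g (a, b, c, d, e, f) = ∑ᶠ y, g y := by
  have key : ∀ {β : Type} (a : ℕ) (g : ℕ × β → RatFunc ℚ), (Function.support g).Finite →
      (Function.support fun b => g (a, b)).Finite := fun a g h =>
    h.preimage (Prod.mk_right_injective a).injOn
  rw [finsum_curry g hg]
  refine finsum_congr fun a => ?_
  have h1 := key a g hg
  rw [finsum_curry _ h1]
  refine finsum_congr fun b => ?_
  have h2 := key b _ h1
  rw [finsum_curry _ h2]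
  refine finsum_congr fun c => ?_
  have h3 := key c _ h2
  rw [finsum_curry _ h3]
  refine finsum_congr fun d => ?_
  have h4 := key d _ h3
  rw [finsum_curry _ h4]

/-- The double bounded key identity (6.3) for Göllnitz's (big) partition theorem, in the
field of rational functions `ℚ(q)`, for arbitrary integers `i, j, k, L, M`.  The left sum
is over all non-negative `α, β, γ, δ, ε, φ` with `i = α + δ + ε`, `j = β + δ + φ`,
`k = γ + ε + φ`, where `s = α + β + γ + δ + ε + φ`. -/
theorem double_bounded_gollnitz_identity (i j k L M : ℤ) :
    (∑ᶠ (α : ℕ) (β : ℕ) (γ : ℕ) (δ : ℕ) (ε : ℕ) (φ : ℕ),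
      if (α : ℤ) + δ + ε = i ∧ (β : ℤ) + δ + φ = j ∧ (γ : ℤ) + ε + φ = k then
        (fun s : ℤ =>
          (RatFunc.X : RatFunc ℚ) ^ (triZ s + triZ (δ : ℤ) + triZ (ε : ℤ) + triZ ((φ : ℤ) - 1)) *
            ((RatFunc.X : RatFunc ℚ) ^ (φ : ℤ) *
                qbinE (L - s + α) (α : ℤ) * qbinE (L - s + β) (β : ℤ) *
                qbinE (M - s + γ) (γ : ℤ) * qbinE (L - s) (δ : ℤ) *
                qbinE (M - s) (ε : ℤ) * qbinE (M - s) (φ : ℤ) +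
              qbinE (L - s + α - 1) ((α : ℤ) - 1) * qbinE (L - s + β) (β : ℤ) *
                qbinE (M - s + γ) (γ : ℤ) * qbinE (L - s) (δ : ℤ) *
                qbinE (M - s) (ε : ℤ) * qbinE (M - s) ((φ : ℤ) - 1)))
          ((α : ℤ) + β + γ + δ + ε + φ)
      else 0) =
    ∑ᶠ (τ : ℕ),
      (RatFunc.X : RatFunc ℚ) ^
          ((τ : ℤ) * (M + 2) - triZ (τ : ℤ) + triZ (i - τ) + triZ (j - τ) + triZ (k - τ)) *
        qbinE (L - τ) (τ : ℤ) * qbinE (L - 2 * τ) (i - τ) *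
        qbinE (L - i - τ) (j - τ) * qbinE (M - i - j) (k - τ) := by
  classical
  have hR : (∑ᶠ (τ : ℕ), (RatFunc.X : RatFunc ℚ) ^
          ((τ : ℤ) * (M + 2) - triZ (τ : ℤ) + triZ (i - τ) + triZ (j - τ) + triZ (k - τ)) *
        qbinE (L - τ) (τ : ℤ) * qbinE (L - 2 * τ) (i - τ) *
        qbinE (L - i - τ) (j - τ) * qbinE (M - i - j) (k - τ)) = rhs i j k L M := by
    unfold rhs
    have h1 : ∑ᶠ t, rT i j k L M t = ∑ᶠ t ∈ Set.range (Nat.cast : ℕ → ℤ), rT i j k L M t := by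
      refine finsum_congr fun t => ?_
      rw [finsum_eq_if]
      split_ifs with h
      · rfl
      · by_contra h'
        have : cC i j L t ≠ 0 := fun h => h' (by simp [rT, h])
        have := cC_support this
        exact h ⟨t.toNat, by omega⟩
    rw [h1, finsum_mem_range Nat.cast_injective]
    refine finsum_congr fun τ => ?_
    unfold rT
    rw [← cC_eq]
    ring
  rw [hR, ← main_eq]
  let ψ : ℕ × ℕ × ℕ × ℕ × ℕ × ℕ → ℤ × ℤ × ℤ :=
    fun y => ((y.2.2.2.1 : ℤ), (y.2.2.2.2.1 : ℤ), (y.2.2.2.2.2 : ℤ))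
  let S : Set (ℕ × ℕ × ℕ × ℕ × ℕ × ℕ) := {y | (y.1 : ℤ) + y.2.2.2.1 + y.2.2.2.2.1 = i ∧
    (y.2.1 : ℤ) + y.2.2.2.1 + y.2.2.2.2.2 = j ∧ (y.2.2.1 : ℤ) + y.2.2.2.2.1 + y.2.2.2.2.2 = k}
  let H : ℤ × ℤ × ℤ → RatFunc ℚ := fun p => fT 0 i j k L M p +
    fT 2 (i - 1) (j - 1) (k - 1) L M (p.1 - 0, p.2.1 - 0, p.2.2 - 1)
  have hH : lhs i j k L M = ∑ᶠ p, H p := by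
    simp only [H]
    rw [finsum_add_distrib (fT_fin ..) (fT_fin' ..), gG_shift]
    rfl
  have hψ : Set.InjOn ψ S := by
    rintro ⟨a, b, c, d, e, f⟩ hy ⟨a', b', c', d', e', f'⟩ hy' h
    simp only [ψ, S, Set.mem_ofPred_eq, Prod.mk.injEq] at hy hy' h ⊢
    omega
  have hS : S.Finite := by
    apply (Set.finite_Icc (0 : ℕ × ℕ × ℕ × ℕ × ℕ × ℕ)
      (i.toNat, j.toNat, k.toNat, i.toNat, i.toNat, j.toNat)).subset
    rintro ⟨a, b, c, d, e, f⟩ hy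
    simp only [S, Set.mem_ofPred_eq] at hy
    simp only [Set.mem_Icc, Prod.le_def, Prod.fst_zero, Prod.snd_zero]
    omega
  have hsupp : ∀ p, H p ≠ 0 → p ∈ ψ '' S := by
    rintro ⟨d, e, f⟩ h
    have : 0 ≤ d ∧ 0 ≤ e ∧ 0 ≤ f ∧ 0 ≤ i - d - e ∧ 0 ≤ j - d - f ∧ 0 ≤ k - e - f := by
      by_cases h0 : fT 0 i j k L M (d, e, f) = 0
      · have h2 : fT 2 (i - 1) (j - 1) (k - 1) L M (d - 0, e - 0, f - 1) ≠ 0 := by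
          intro h2
          exact h (by simp only [H]; rw [h0, h2, add_zero])
        have := fT_support h2
        simp only at this
        omega
      · exact fT_support h0
    refine ⟨((i - d - e).toNat, (j - d - f).toNat, (k - e - f).toNat, d.toNat, e.toNat, f.toNat),
      ?_, ?_⟩
    · simp only [S, Set.mem_ofPred_eq]
      omega
    · simp only [ψ, Prod.mk.injEq]
      omega
  have h1 : ∑ᶠ p, H p = ∑ᶠ p ∈ ψ '' S, H p := by
    refine finsum_congr fun p => ?_
    rw [finsum_eq_if]
    split_ifs with h
    · rfl
    · by_contra h'
      exact h (hsupp p h')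
  rw [hH, h1, finsum_mem_image hψ]
  have h2 : ∀ y, (∑ᶠ (_ : y ∈ S), H (ψ y)) = if y ∈ S then H (ψ y) else 0 := fun y =>
    finsum_eq_if
  rw [finsum_congr h2, ← curry6 _ (hS.subset fun y hy => by
    by_contra h
    exact hy (if_neg h))]
  refine finsum_congr fun α => finsum_congr fun β => finsum_congr fun γ => finsum_congr fun δ =>
    finsum_congr fun ε => finsum_congr fun φ => ?_
  by_cases hc : (α : ℤ) + δ + ε = i ∧ (β : ℤ) + δ + φ = j ∧ (γ : ℤ) + ε + φ = k
  · rw [if_pos hc, if_pos (show (α, β, γ, δ, ε, φ) ∈ S from hc)]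
    simp only [H, ψ]
    have t := triZ_sub_one φ
    rw [fT_eq (S := (α : ℤ) + β + γ + δ + ε + φ) (a := α) (b := β) (c := γ)
        (triZ ((α : ℤ) + β + γ + δ + ε + φ) + triZ (δ : ℤ) + triZ (ε : ℤ) + triZ ((φ : ℤ) - 1) + φ)
        (by omega) rfl rfl (by omega) (by omega) (by omega) (by omega),
      fT_eq (S := (α : ℤ) + β + γ + δ + ε + φ) (a := (α : ℤ) - 1) (b := β) (c := γ)
        (triZ ((α : ℤ) + β + γ + δ + ε + φ) + triZ (δ : ℤ) + triZ (ε : ℤ) + triZ ((φ : ℤ) - 1))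
        (by omega) rfl rfl (by omega) (by omega) (by omega) (by simp only [sub_zero]),
      zpow_add₀ qq_ne _ (φ : ℤ)]
    unfold core
    simp only [sub_zero, add_sub_assoc]
    ring
  · rw [if_neg hc, if_neg (show (α, β, γ, δ, ε, φ) ∉ S from hc)]
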